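/- Let f : ℝ → ℝ be continuous with f(0) = 0. Let φ : [0,∞)×(0,∞) → ℝ be smooth, with r ↦ φ(t,r) compactly supported in (0,∞) for each t, satisfying ∂ₜ²φ = ∂ᵣ²φ + (2/r)∂ᵣφ − f(φ), and suppose sup_{t≥0} ∫₀^∞ ( r²((∂ₜφ)² + (∂ᵣφ)²)(t,r) ) dr < ∞. Then with the weight ψ(r) = r²/(1+r), the virial functional I(t) = ∫₀^∞ [ (r²/(1+r)) ∂ᵣφ ∂ₜφ + ( r(r+2)/(2(1+r)²) ) φ ∂ₜφ ] dr is well-defined, and there is a constant C > 0 (independent of t) such that |I(t)| ≤ C · sup_{s≥0} ∫₀^∞ r²((∂ₜφ)² + (∂ᵣφ)²)(s,r) dr for all t ≥ 0. -/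

import Mathlib

open MeasureTheory Filter

noncomputable section

/-- First time derivative `∂ₜφ`. -/
def pt (φ : ℝ → ℝ → ℝ) (t r : ℝ) : ℝ := deriv (fun s => φ s r) t

/-- Radial derivative `∂ᵣφ`. -/
def pr (φ : ℝ → ℝ → ℝ) (t r : ℝ) : ℝ := deriv (fun ρ => φ t ρ) r

/-- Second time derivative `∂ₜ²φ`. -/
def ptt (φ : ℝ → ℝ → ℝ) (t r : ℝ) : ℝ := deriv (fun s => pt φ s r) t

/-- Second radial derivative `∂ᵣ²φ`. -/
def prr (φ : ℝ → ℝ → ℝ) (t r : ℝ) : ℝ := deriv (fun ρ => pr φ t ρ) r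

/-- The potential `F(s) = ∫₀ˢ f(σ) dσ`. -/
def pot (f : ℝ → ℝ) (s : ℝ) : ℝ := ∫ σ in (0:ℝ)..s, f σ

/-- The radial profile `r ↦ φ t r` is compactly supported inside `(0,∞)` for each `t`. -/
def SuppIn (φ : ℝ → ℝ → ℝ) : Prop :=
  ∀ t : ℝ, ∃ a b : ℝ, 0 < a ∧ ∀ r : ℝ, r < a ∨ b < r → φ t r = 0

/-!
Since `r²/(1+r) ≤ r²` and `r(r+2)/(2(1+r)²) ≤ r`, the integrand of `I(t)` is at most
`|r∂ᵣφ · r∂ₜφ| + |φ · r∂ₜφ|`, which Young's inequality and Hardy's inequality bound in integral by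
the energy. Hardy's inequality follows by integrating
`0 ≤ (u + 2ru')² = 2(ru²)' - u² + 4r²u'²` over `(0, ∞)`.

At a given time `t` the function `∂ₜφ(t, ·)` need not have bounded support, so the energy integral
could a priori diverge and be assigned the junk value `0`. By the Baire category theorem the support
of `φ` is locally uniformly bounded around a dense set of times, at which the energy density is
integrable, and Fatou's lemma extends the bound from these to all times.
-/

open Set Topology

section EventualVanishing

variable {F : Type*} [NormedAddCommGroup F]

theorem integrableOn_Ioi_of_eventually_eq_zero {μ : Measure ℝ} [IsLocallyFiniteMeasure μ]
    {g : ℝ → F} (hg : Continuous g) (hzero : ∀ᶠ r in atTop, g r = 0) (a : ℝ) :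
    IntegrableOn g (Ioi a) μ := by
  have h_atTop : IntegrableAtFilter g atTop μ := by
    refine ⟨_, hzero, (integrableOn_congr_fun_ae ?_).2 integrableOn_zero⟩
    exact ae_restrict_of_forall_mem (isClosed_eq hg continuous_const).measurableSet fun _ => id
  exact (integrableOn_Ici_iff_integrableAtFilter_atTop.2
    ⟨h_atTop, hg.locallyIntegrable.locallyIntegrableOn _⟩).mono_set Ioi_subset_Ici_self

theorem eventually_atTop_deriv_eq_zero [NormedSpace ℝ F] {u : ℝ → F}
    (hu : ∀ᶠ r in atTop, u r = 0) : ∀ᶠ r in atTop, deriv u r = 0 := by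
  obtain ⟨b, hb⟩ := eventually_atTop.1 hu
  filter_upwards [eventually_gt_atTop b] with r hr
  have : u =ᶠ[𝓝 r] fun _ => 0 := (eventually_gt_nhds hr).mono fun ρ hρ => hb ρ hρ.le
  rw [this.deriv_eq, deriv_const]

end EventualVanishing

section Baire

variable {X ι : Type*} [TopologicalSpace X] [BaireSpace X] {l : Filter ι} [l.IsCountablyGenerated]
  {P : X → ι → Prop}

theorem dense_setOf_eventually_nhds_prod (hclosed : ∀ i, IsClosed {x | P x i})
    (hP : ∀ x, ∀ᶠ i in l, P x i) : Dense {x | ∀ᶠ p in 𝓝 x ×ˢ l, P p.1 p.2} := by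
  obtain ⟨B, hB⟩ := l.exists_antitone_basis
  let T : ℕ → Set X := fun n => {x | ∀ i ∈ B n, P x i}
  have hT_closed (n : ℕ) : IsClosed (T n) := by
    simp only [T, ofPred_forall]
    exact isClosed_biInter fun i _ => hclosed i
  have hT_cover : ⋃ n, T n = univ := eq_univ_of_forall fun x =>
    let ⟨n, _, hn⟩ := hB.1.eventually_iff.1 (hP x)
    mem_iUnion.2 ⟨n, fun _ hi => hn hi⟩
  refine (dense_iUnion_interior_of_closed hT_closed hT_cover).mono (iUnion_subset fun n x hx => ?_)
  have hx_nhds : ∀ᶠ y in 𝓝 x, ∀ i ∈ B n, P y i := mem_interior_iff_mem_nhds.1 hx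
  exact (hx_nhds.prod_mk (hB.mem n)).mono fun p hp => hp.1 p.2 hp.2

theorem closure_subset_closure_inter_setOf_eventually_nhds_prod {U : Set X} (hU : IsOpen U)
    (hclosed : ∀ i, IsClosed {x | P x i}) (hP : ∀ x ∈ U, ∀ᶠ i in l, P x i) :
    closure U ⊆ closure (U ∩ {x | ∀ᶠ p in 𝓝 x ×ˢ l, P p.1 p.2}) := by
  have hdense : Dense {x | ∀ᶠ p in 𝓝 x ×ˢ l, p.1 ∈ U → P p.1 p.2} :=
    dense_setOf_eventually_nhds_prod (P := fun x i => x ∈ U → P x i)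
      (fun i => isClosed_imp hU (hclosed i))
      fun x => eventually_imp_distrib_left.2 (hP x)
  refine closure_minimal ((hdense.open_subset_closure_inter hU).trans ?_) isClosed_closure
  refine closure_mono fun y ⟨hyU, (hy : ∀ᶠ p in 𝓝 y ×ˢ l, p.1 ∈ U → P p.1 p.2)⟩ => ?_
  exact ⟨hyU, hy.mp (((hU.eventually_mem hyU).prod_inl l).mono fun p hpU hp => hp hpU)⟩

end Baire

section Integral

variable {α E : Type*} [MeasurableSpace α] {μ : Measure α} [NormedAddCommGroup E]

theorem integrable_and_integral_norm_le_of_tendsto {ι : Type*} {l : Filter ι}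
    [l.IsCountablyGenerated] {g : ι → α → E} {h : α → E} {S : ℝ}
    (hg : ∀ i, AEStronglyMeasurable (g i) μ)
    (hlim : ∀ᵐ a ∂μ, Tendsto (fun i => g i a) l (𝓝 (h a)))
    (hbound : ∃ᶠ i in l, Integrable (g i) μ ∧ ∫ a, ‖g i a‖ ∂μ ≤ S) :
    Integrable h μ ∧ ∫ a, ‖h a‖ ∂μ ≤ S := by
  have : l.NeBot := neBot_iff.2 fun hl => by simp [hl] at hbound
  have hS : 0 ≤ S :=
    let ⟨_, _, hi⟩ := hbound.exists
    (integral_nonneg fun _ => norm_nonneg _).trans hi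
  have hh : AEStronglyMeasurable h μ := aestronglyMeasurable_of_tendsto_ae l hg hlim
  have hlintegral : ∫⁻ a, ‖h a‖ₑ ∂μ ≤ ENNReal.ofReal S := calc
    ∫⁻ a, ‖h a‖ₑ ∂μ = ∫⁻ a, liminf (fun i => ‖g i a‖ₑ) l ∂μ :=
      lintegral_congr_ae (hlim.mono fun a ha => ha.enorm.liminf_eq.symm)
    _ ≤ liminf (fun i => ∫⁻ a, ‖g i a‖ₑ ∂μ) l := lintegral_liminf_le' fun i => (hg i).enorm
    _ ≤ ENNReal.ofReal S := liminf_le_of_frequently_le' <| hbound.mono fun i hi => by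
      rw [← ofReal_integral_norm_eq_lintegral_enorm hi.1]
      exact ENNReal.ofReal_le_ofReal hi.2
  refine ⟨⟨hh, hlintegral.trans_lt ENNReal.ofReal_lt_top⟩, ?_⟩
  rw [integral_norm_eq_lintegral_enorm hh]
  exact ENNReal.toReal_le_of_le_ofReal hS hlintegral

theorem integrable_and_abs_integral_le_of_hardy {u P Q g : α → ℝ}
    (hg : AEStronglyMeasurable g μ) (hu : Integrable (fun a => u a ^ 2) μ)
    (hP : Integrable (fun a => P a ^ 2) μ) (hQ : Integrable (fun a => Q a ^ 2) μ)
    (hardy : ∫ a, u a ^ 2 ∂μ ≤ 4 * ∫ a, P a ^ 2 ∂μ)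
    (hle : ∀ᵐ a ∂μ, |g a| ≤ |P a * Q a| + |u a * Q a|) :
    Integrable g μ ∧ |∫ a, g a ∂μ| ≤ 3 / 2 * ∫ a, (Q a ^ 2 + P a ^ 2) ∂μ := by
  -- The split `|uQ| ≤ u²/4 + Q²` makes Hardy's factor `4` give `P²` and `Q²` the same coefficient.
  have hle' : ∀ᵐ a ∂μ, ‖g a‖ ≤ 1 / 2 * P a ^ 2 + 3 / 2 * Q a ^ 2 + 1 / 4 * u a ^ 2 := by
    filter_upwards [hle] with a ha
    have hPQ : |P a * Q a| ≤ 1 / 2 * P a ^ 2 + 1 / 2 * Q a ^ 2 :=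
      abs_le.2 ⟨by nlinarith [sq_nonneg (P a + Q a)], by nlinarith [sq_nonneg (P a - Q a)]⟩
    have huQ : |u a * Q a| ≤ 1 / 4 * u a ^ 2 + Q a ^ 2 :=
      abs_le.2 ⟨by nlinarith [sq_nonneg (u a / 2 + Q a)], by nlinarith [sq_nonneg (u a / 2 - Q a)]⟩
    rw [Real.norm_eq_abs]
    linarith
  have hPQ_int : Integrable (fun a => 1 / 2 * P a ^ 2 + 3 / 2 * Q a ^ 2) μ :=
    (hP.const_mul _).add (hQ.const_mul _)
  have hdom_int : Integrable (fun a => 1 / 2 * P a ^ 2 + 3 / 2 * Q a ^ 2 + 1 / 4 * u a ^ 2) μ :=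
    hPQ_int.add (hu.const_mul _)
  refine ⟨hdom_int.mono' hg hle', ?_⟩
  calc |∫ a, g a ∂μ|
      ≤ ∫ a, (1 / 2 * P a ^ 2 + 3 / 2 * Q a ^ 2 + 1 / 4 * u a ^ 2) ∂μ :=
        norm_integral_le_of_norm_le hdom_int hle'
    _ = 1 / 2 * ∫ a, P a ^ 2 ∂μ + 3 / 2 * ∫ a, Q a ^ 2 ∂μ + 1 / 4 * ∫ a, u a ^ 2 ∂μ := by
        rw [integral_add hPQ_int (hu.const_mul _),
          integral_add (hP.const_mul _) (hQ.const_mul _)]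
        simp only [integral_const_mul]
    _ ≤ 3 / 2 * (∫ a, Q a ^ 2 ∂μ + ∫ a, P a ^ 2 ∂μ) := by linarith
    _ = 3 / 2 * ∫ a, (Q a ^ 2 + P a ^ 2) ∂μ := by rw [integral_add hQ hP]

end Integral

theorem integral_sq_le_four_mul_integral_mul_deriv_sq {u : ℝ → ℝ}
    (hcont : ContinuousWithinAt u (Ici 0) 0) (hdiff : ∀ r ∈ Ioi (0 : ℝ), DifferentiableAt ℝ u r)
    (hu : IntegrableOn (fun r => u r ^ 2) (Ioi 0))
    (hdu : IntegrableOn (fun r => (r * deriv u r) ^ 2) (Ioi 0))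
    (hlim : Tendsto (fun r => r * u r ^ 2) atTop (𝓝 0)) :
    ∫ r in Ioi (0 : ℝ), u r ^ 2 ≤ 4 * ∫ r in Ioi (0 : ℝ), (r * deriv u r) ^ 2 := by
  have hderiv : ∀ r ∈ Ioi (0 : ℝ), HasDerivAt (fun r => r * u r ^ 2)
      (u r ^ 2 + 2 * (u r * (r * deriv u r))) r := fun r hr => by
    convert! (hasDerivAt_id r).mul ((hdiff r hr).hasDerivAt.pow 2) using 1
    simp only [id_eq, Pi.pow_apply]
    ring
  have hcross : IntegrableOn (fun r => u r * (r * deriv u r)) (Ioi 0) := by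
    have hu_meas : AEStronglyMeasurable u (volume.restrict (Ioi 0)) :=
      ContinuousOn.aestronglyMeasurable
        (fun r hr => (hdiff r hr).continuousAt.continuousWithinAt) measurableSet_Ioi
    have hdu_meas : AEStronglyMeasurable (fun r => r * deriv u r) (volume.restrict (Ioi 0)) :=
      (measurable_id.mul (measurable_deriv u)).aestronglyMeasurable
    exact ((memLp_two_iff_integrable_sq hu_meas).2 hu).integrable_mul
      ((memLp_two_iff_integrable_sq hdu_meas).2 hdu)
  have hderiv_int : IntegrableOn (fun r => u r ^ 2 + 2 * (u r * (r * deriv u r))) (Ioi 0) :=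
    hu.add (hcross.const_mul 2)
  have hboundary : ∫ r in Ioi (0 : ℝ), (u r ^ 2 + 2 * (u r * (r * deriv u r))) = 0 := by
    rw [integral_Ioi_of_hasDerivAt_of_tendsto (continuousWithinAt_id.mul (hcont.pow 2)) hderiv
      hderiv_int hlim]
    simp
  calc ∫ r in Ioi (0 : ℝ), u r ^ 2
      ≤ ∫ r in Ioi (0 : ℝ),
          (4 * (r * deriv u r) ^ 2 + 2 * (u r ^ 2 + 2 * (u r * (r * deriv u r)))) :=
        integral_mono hu ((hdu.const_mul 4).add (hderiv_int.const_mul 2)) fun r => by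
          nlinarith [sq_nonneg (u r + 2 * (r * deriv u r))]
    _ = 4 * ∫ r in Ioi (0 : ℝ), (r * deriv u r) ^ 2 := by
        rw [integral_add (hdu.const_mul 4) (hderiv_int.const_mul 2), integral_const_mul,
          integral_const_mul, hboundary, mul_zero, add_zero]

theorem continuous_deriv_of_contDiff_uncurry {𝕜 E F : Type*} [NontriviallyNormedField 𝕜]
    [NormedAddCommGroup E] [NormedSpace 𝕜 E] [NormedAddCommGroup F] [NormedSpace 𝕜 F]
    {f : E → 𝕜 → F} (hf : ContDiff 𝕜 1 (Function.uncurry f)) :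
    Continuous fun p : E × 𝕜 => deriv (f p.1) p.2 := by
  have hf' : ContDiff 𝕜 1 (Function.uncurry fun p : E × 𝕜 => f p.1) :=
    hf.comp (contDiff_fst.fst.prodMk contDiff_snd)
  exact (hf'.fderiv_apply (n := 0) contDiff_snd contDiff_const (by simp)).continuous

/-- The radial energy density `r²((∂ₜφ)² + (∂ᵣφ)²)`, including the Jacobian factor `r²` of polar
coordinates, so that its integral over `(0, ∞)` is the kinetic plus gradient energy at time `t`. -/
def energyDensity (φ : ℝ → ℝ → ℝ) (t r : ℝ) : ℝ := r ^ 2 * (pt φ t r ^ 2 + pr φ t r ^ 2)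

section RadialField

variable {φ : ℝ → ℝ → ℝ}

theorem SuppIn.eventually_atTop_eq_zero (hsupp : SuppIn φ) (t : ℝ) : ∀ᶠ r in atTop, φ t r = 0 :=
  let ⟨_, b, _, hb⟩ := hsupp t
  (eventually_gt_atTop b).mono fun r hr => hb r (Or.inr hr)

theorem continuous_pt (hφ : ContDiff ℝ 1 (Function.uncurry φ)) :
    Continuous fun p : ℝ × ℝ => pt φ p.1 p.2 :=
  (continuous_deriv_of_contDiff_uncurry (f := fun r t => φ t r)
    (hφ.comp (contDiff_snd.prodMk contDiff_fst))).comp continuous_swap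

theorem continuous_pr (hφ : ContDiff ℝ 1 (Function.uncurry φ)) :
    Continuous fun p : ℝ × ℝ => pr φ p.1 p.2 :=
  continuous_deriv_of_contDiff_uncurry hφ

theorem continuous_energyDensity (hφ : ContDiff ℝ 1 (Function.uncurry φ)) :
    Continuous fun p : ℝ × ℝ => energyDensity φ p.1 p.2 :=
  (continuous_snd.pow 2).mul (((continuous_pt hφ).pow 2).add ((continuous_pr hφ).pow 2))

theorem energyDensity_eq_sq_add_sq (t r : ℝ) :
    energyDensity φ t r = (r * pt φ t r) ^ 2 + (r * pr φ t r) ^ 2 := by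
  rw [energyDensity]
  ring

theorem energyDensity_nonneg (t r : ℝ) : 0 ≤ energyDensity φ t r := by
  unfold energyDensity
  positivity

theorem eventually_energyDensity_eq_zero {t : ℝ}
    (hzero : ∀ᶠ p in 𝓝 t ×ˢ atTop, φ p.1 p.2 = 0) : ∀ᶠ r in atTop, energyDensity φ t r = 0 := by
  have hpr : ∀ᶠ r in atTop, pr φ t r = 0 :=
    eventually_atTop_deriv_eq_zero hzero.curry.self_of_nhds
  have hpt : ∀ᶠ r in atTop, pt φ t r = 0 := by
    filter_upwards [(eventually_swap_iff.1 hzero).curry] with r hr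
    have : (fun s => φ s r) =ᶠ[𝓝 t] fun _ => 0 := hr
    rw [pt, this.deriv_eq, deriv_const]
  filter_upwards [hpt, hpr] with r hpt_zero hpr_zero
  simp [energyDensity, hpt_zero, hpr_zero]

theorem integrableOn_energyDensity_and_integral_le (hφ : ContDiff ℝ 1 (Function.uncurry φ))
    (hsupp : ∀ t, 0 ≤ t → ∀ᶠ r in atTop, φ t r = 0) {S : ℝ}
    (hS : ∀ t, 0 ≤ t → ∫ r in Ioi (0 : ℝ), energyDensity φ t r ≤ S) {t : ℝ} (ht : 0 ≤ t) :
    IntegrableOn (energyDensity φ t) (Ioi 0) ∧ ∫ r in Ioi (0 : ℝ), energyDensity φ t r ≤ S := by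
  have hcont := continuous_energyDensity hφ
  have hslice (s : ℝ) : Continuous (energyDensity φ s) := hcont.comp (.prodMk_right s)
  have hlim (r : ℝ) : Tendsto (fun s => energyDensity φ s r) (𝓝 t) (𝓝 (energyDensity φ t r)) :=
    (hcont.comp (.prodMk_left r)).tendsto t
  have hnorm (s r : ℝ) : ‖energyDensity φ s r‖ = energyDensity φ s r :=
    Real.norm_of_nonneg (energyDensity_nonneg s r)
  have hbound : ∃ᶠ s in 𝓝 t, IntegrableOn (energyDensity φ s) (Ioi 0) ∧
      ∫ r in Ioi (0 : ℝ), ‖energyDensity φ s r‖ ≤ S := by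
    simp only [hnorm]
    have ht_mem : t ∈ closure (Ioi 0 ∩ {s | ∀ᶠ p in 𝓝 s ×ˢ atTop, φ p.1 p.2 = 0}) :=
      closure_subset_closure_inter_setOf_eventually_nhds_prod isOpen_Ioi
        (fun r => isClosed_eq (hφ.continuous.comp (.prodMk_left r)) continuous_const)
        (fun s hs => hsupp s (le_of_lt hs)) (by rwa [closure_Ioi])
    refine (mem_closure_iff_frequently.1 ht_mem).mono fun s ⟨hs, hzero⟩ => ?_
    exact ⟨integrableOn_Ioi_of_eventually_eq_zero (hslice s)
      (eventually_energyDensity_eq_zero hzero) 0, hS s (le_of_lt hs)⟩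
  simpa only [hnorm] using! integrable_and_integral_norm_le_of_tendsto
    (fun s => (hslice s).aestronglyMeasurable) (.of_forall hlim) hbound

end RadialField

theorem abs_virial_integrand_le {r : ℝ} (hr : 0 ≤ r) (u p q : ℝ) :
    |(r ^ 2 / (1 + r)) * p * q + (r * (r + 2) / (2 * (1 + r) ^ 2)) * (u * q)| ≤
      |r * p * (r * q)| + |u * (r * q)| := by
  have hweight_grad : r ^ 2 / (1 + r) ≤ r ^ 2 := div_le_self (by positivity) (by linarith)
  have hweight_field : r * (r + 2) / (2 * (1 + r) ^ 2) ≤ r := by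
    rw [div_le_iff₀ (by positivity)]
    gcongr
    nlinarith
  calc _ ≤ |r ^ 2 / (1 + r) * p * q| + |r * (r + 2) / (2 * (1 + r) ^ 2) * (u * q)| :=
        abs_add_le _ _
    _ = r ^ 2 / (1 + r) * |p * q| + r * (r + 2) / (2 * (1 + r) ^ 2) * |u * q| := by
        rw [mul_assoc, abs_mul _ (p * q), abs_mul _ (u * q),
          abs_of_nonneg (a := r ^ 2 / (1 + r)) (by positivity),
          abs_of_nonneg (a := r * (r + 2) / (2 * (1 + r) ^ 2)) (by positivity)]
    _ ≤ r ^ 2 * |p * q| + r * |u * q| := by gcongr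
    _ = |r * p * (r * q)| + |u * (r * q)| := by
        rw [mul_mul_mul_comm, mul_left_comm u, abs_mul (r * r), abs_mul r (u * q),
          abs_mul_self, abs_of_nonneg hr, sq]

theorem virial_I_bounded_general
    (φ : ℝ → ℝ → ℝ) (hφ : ContDiff ℝ 1 (Function.uncurry φ))
    (hsupp : ∀ t : ℝ, 0 ≤ t → ∀ᶠ r in atTop, φ t r = 0) (S : ℝ)
    (hS : ∀ t : ℝ, 0 ≤ t →
      (∫ r in Set.Ioi (0:ℝ), r ^ 2 * ((pt φ t r) ^ 2 + (pr φ t r) ^ 2)) ≤ S)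
    (t : ℝ) (ht : 0 ≤ t) :
    IntegrableOn (fun r : ℝ =>
        (r ^ 2 / (1 + r)) * pr φ t r * pt φ t r
          + (r * (r + 2) / (2 * (1 + r) ^ 2)) * (φ t r * pt φ t r)) (Set.Ioi (0:ℝ)) ∧
    |∫ r in Set.Ioi (0:ℝ),
        ((r ^ 2 / (1 + r)) * pr φ t r * pt φ t r
          + (r * (r + 2) / (2 * (1 + r) ^ 2)) * (φ t r * pt φ t r))| ≤ 3 / 2 * S := by
  obtain ⟨henergy_int, henergy_le⟩ := integrableOn_energyDensity_and_integral_le hφ hsupp hS ht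
  have hu : ContDiff ℝ 1 (φ t) := hφ.comp (contDiff_prodMk_right t)
  have hu_cont : Continuous (φ t) := hu.continuous
  have hpr : Continuous (pr φ t) := (continuous_pr hφ).comp (.prodMk_right t)
  have hpt : Continuous (pt φ t) := (continuous_pt hφ).comp (.prodMk_right t)
  have hpr_zero : ∀ᶠ r in atTop, pr φ t r = 0 := eventually_atTop_deriv_eq_zero (hsupp t ht)
  have hu_sq : IntegrableOn (fun r => φ t r ^ 2) (Ioi 0) :=
    integrableOn_Ioi_of_eventually_eq_zero (by fun_prop)
      ((hsupp t ht).mono fun r hr => by simp [hr]) 0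
  have hpr_sq : IntegrableOn (fun r => (r * pr φ t r) ^ 2) (Ioi 0) :=
    integrableOn_Ioi_of_eventually_eq_zero (by fun_prop) (hpr_zero.mono fun r hr => by simp [hr]) 0
  have hpt_sq : IntegrableOn (fun r => (r * pt φ t r) ^ 2) (Ioi 0) := by
    refine (henergy_int.sub hpr_sq).congr_fun (fun r _ => ?_) measurableSet_Ioi
    simp [energyDensity_eq_sq_add_sq]
  have hardy := integral_sq_le_four_mul_integral_mul_deriv_sq hu_cont.continuousWithinAt
    (fun r _ => hu.differentiable one_ne_zero r) hu_sq hpr_sq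
    (tendsto_const_nhds.congr' ((hsupp t ht).mono fun r hr => by simp [hr]))
  have hmeas : Measurable fun r : ℝ => (r ^ 2 / (1 + r)) * pr φ t r * pt φ t r
      + (r * (r + 2) / (2 * (1 + r) ^ 2)) * (φ t r * pt φ t r) := by
    fun_prop
  obtain ⟨hint, hle⟩ := integrable_and_abs_integral_le_of_hardy hmeas.aestronglyMeasurable hu_sq
    hpr_sq hpt_sq hardy (ae_restrict_of_forall_mem measurableSet_Ioi fun r hr =>
      abs_virial_integrand_le (le_of_lt hr) _ _ _)
  simp only [← energyDensity_eq_sq_add_sq] at hle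
  exact ⟨hint, hle.trans (by gcongr)⟩

/-- With the weight `ψ(r) = r²/(1+r)`, the virial functional
`I(t) = ∫₀^∞ (r²/(1+r)) ∂ᵣφ ∂ₜφ + (r(r+2)/(2(1+r)²)) φ ∂ₜφ dr` is well defined and
uniformly bounded in time by the energy. -/
theorem virial_I_bounded
    (f : ℝ → ℝ) (hf : Continuous f) (hf0 : f 0 = 0)
    (φ : ℝ → ℝ → ℝ) (hφ : ContDiff ℝ (⊤ : ℕ∞) (Function.uncurry φ))
    (hsupp : SuppIn φ)
    (heq : ∀ t : ℝ, 0 ≤ t → ∀ r : ℝ, 0 < r →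
      ptt φ t r = prr φ t r + (2 / r) * pr φ t r - f (φ t r))
    (S : ℝ)
    (hS : ∀ t : ℝ, 0 ≤ t →
      (∫ r in Set.Ioi (0:ℝ), r ^ 2 * ((pt φ t r) ^ 2 + (pr φ t r) ^ 2)) ≤ S) :
    ∃ C : ℝ, 0 < C ∧ ∀ t : ℝ, 0 ≤ t →
      IntegrableOn (fun r : ℝ =>
          (r ^ 2 / (1 + r)) * pr φ t r * pt φ t r
            + (r * (r + 2) / (2 * (1 + r) ^ 2)) * (φ t r * pt φ t r)) (Set.Ioi (0:ℝ)) ∧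
      |∫ r in Set.Ioi (0:ℝ),
          ((r ^ 2 / (1 + r)) * pr φ t r * pt φ t r
            + (r * (r + 2) / (2 * (1 + r) ^ 2)) * (φ t r * pt φ t r))| ≤ C * S := by
  exact ⟨3 / 2, by norm_num, virial_I_bounded_general φ (hφ.of_le (by simp))
    (fun t _ => hsupp.eventually_atTop_eq_zero t) S hS⟩

end
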